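/- If n ≥ 1, k ≥ 1 and n + k is even, then P_{n−1}(k−1) − P_{n+1}(k−1) = (k/n)·P(Sₙ = k). -/

import Mathlib

/-!
Write `f m j = P(S_m = j)`. Conditioning on the first sign gives
`f (m+1) j = (f m (j-1) + f m (j+1)) / 2`, so `f m - f (m+2)` is `-1/4` times a second difference
of `f m` with step `2`. Summing over `|j| ≤ K` telescopes, and by the symmetry of `f m`
(`P_sub_P_add_two`)
`P_m(K) - P_{m+2}(K) = (f m K + f m (K-1) - f m (K+1) - f m (K+2)) / 2`.
With `m = n - 1` and `K = k - 1`, parity kills the two middle terms. What remains,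
`(f m (k-1) - f m (k+1)) / 2`, is compared with `f n k = (f m (k-1) + f m (k+1)) / 2` through the
ratio identity `(m+1-j) f m (j-1) = (m+1+j) f m (j+1)` of `prEq_ratio`, which is the ratio of
consecutive binomial coefficients and is proved by induction on `m` from the same recursion.
-/

/-- Probability of an event under the uniform distribution on sign vectors
`{-1,1}^n` (encoded as `Fin n → Bool`), which is the joint law of `n`
independent Rademacher random variables. -/
noncomputable def pr (n : ℕ) (E : (Fin n → Bool) → Prop) : ℝ :=
  letI := Classical.decPred E
  ((Finset.univ.filter E).card : ℝ) / 2 ^ n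

/-- `S n ε = ε₁ + ⋯ + εₙ`, the sum of `n` Rademacher variables. -/
def S (n : ℕ) (ε : Fin n → Bool) : ℤ := ∑ i, if ε i then 1 else -1

/-- `P n k = P(|Sₙ| ≤ k)` (with an integer threshold, so `P n (-1) = 0`). -/
noncomputable def P (n : ℕ) (k : ℤ) : ℝ := pr n fun ε => |S n ε| ≤ k

/-- `prEq n j = P(Sₙ = j)`. -/
noncomputable def prEq (n : ℕ) (j : ℤ) : ℝ := pr n fun ε => S n ε = j

/-- `Pxi ξ n = P(|Sₙ| ≤ ξ·√n)`. -/
noncomputable def Pxi (ξ : ℝ) (n : ℕ) : ℝ :=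
  pr n fun ε => (|S n ε| : ℝ) ≤ ξ * Real.sqrt n

/-- `nseq ξ k = nₖ = 2·⌈(k²/ξ² + k)/2⌉ − k − 1`. -/
noncomputable def nseq (ξ : ℝ) (k : ℕ) : ℤ :=
  2 * ⌈((k : ℝ) ^ 2 / ξ ^ 2 + (k : ℝ)) / 2⌉ - k - 1

lemma pr_eq_sum (n : ℕ) (E : (Fin n → Bool) → Prop) [DecidablePred E] :
    pr n E = (∑ ε, if E ε then (1 : ℝ) else 0) / 2 ^ n := by
  classical
  unfold pr
  rw [Finset.sum_boole]
  congr!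

lemma prEq_succ (m : ℕ) (j : ℤ) :
    prEq (m + 1) j = (prEq m (j - 1) + prEq m (j + 1)) / 2 := by
  unfold prEq
  rw [pr_eq_sum, pr_eq_sum, pr_eq_sum,
    ← (Fin.consEquiv (fun _ : Fin (m + 1) => Bool)).sum_comp, Fintype.sum_prod_type,
    Fintype.sum_bool]
  have h1 : ∀ ε : Fin m → Bool,
      S (m + 1) (Fin.consEquiv (fun _ : Fin (m + 1) => Bool) (true, ε)) = j ↔ S m ε = j - 1 := by
    intro ε
    simp only [S, Fin.sum_univ_succ, Fin.consEquiv_apply, Fin.cons_zero, Fin.cons_succ, if_true]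
    constructor <;> intro h <;> linarith
  have h2 : ∀ ε : Fin m → Bool,
      S (m + 1) (Fin.consEquiv (fun _ : Fin (m + 1) => Bool) (false, ε)) = j ↔ S m ε = j + 1 := by
    intro ε
    simp only [S, Fin.sum_univ_succ, Fin.consEquiv_apply, Fin.cons_zero, Fin.cons_succ,
      Bool.false_eq_true, if_false]
    constructor <;> intro h <;> linarith
  simp only [h1, h2]
  rw [pow_succ]
  field_simp

lemma prEq_zero (j : ℤ) : prEq 0 j = if j = 0 then 1 else 0 := by
  unfold prEq
  rw [pr_eq_sum]
  simp only [S, Finset.univ_eq_empty, Finset.sum_empty, eq_comm (a := (0 : ℤ))]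
  simp

lemma prEq_neg (m : ℕ) (j : ℤ) : prEq m (-j) = prEq m j := by
  induction m generalizing j with
  | zero => simp [prEq_zero]
  | succ m ih =>
    rw [prEq_succ, prEq_succ, ← ih (j - 1), ← ih (j + 1), add_comm]
    congr 3 <;> ring

lemma prEq_of_odd (m : ℕ) (j : ℤ) (h : Odd (m + j)) : prEq m j = 0 := by
  induction m generalizing j with
  | zero =>
    rw [prEq_zero, if_neg]
    rintro rfl
    simp at h
  | succ m ih =>
    push_cast at h
    rw [prEq_succ, ih (j - 1) (by grind), ih (j + 1) (by grind)]
    simp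

/-- The ratio of consecutive binomial coefficients, in terms of the law of `S_m`. -/
lemma prEq_ratio (m : ℕ) (j : ℤ) :
    ((m : ℝ) + 1 - j) * prEq m (j - 1) = (m + 1 + j) * prEq m (j + 1) := by
  induction m generalizing j with
  | zero =>
    rw [prEq_zero, prEq_zero]
    by_cases h1 : j = 1
    · subst h1; norm_num
    by_cases h2 : j = -1
    · subst h2; norm_num
    rw [if_neg (by omega), if_neg (by omega)]
    simp
  | succ m ih =>
    have a := ih (j - 1)
    have b := ih (j + 1)
    rw [prEq_succ, prEq_succ]
    simp only [sub_add_cancel, add_sub_cancel_right] at a b ⊢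
    push_cast at a b ⊢
    linarith

lemma P_zero (m : ℕ) : P m 0 = prEq m 0 := by
  simp only [P, prEq, abs_nonpos_iff]

lemma P_succ (m K : ℕ) : P m ((K : ℤ) + 1) = P m K + 2 * prEq m (K + 1) := by
  have h : P m ((K : ℤ) + 1) = P m K + prEq m (K + 1) + prEq m (-(K + 1)) := by
    unfold P prEq
    rw [pr_eq_sum, pr_eq_sum, pr_eq_sum, pr_eq_sum, ← add_div, ← add_div,
      ← Finset.sum_add_distrib, ← Finset.sum_add_distrib]
    congr 1
    refine Finset.sum_congr rfl fun ε _ => ?_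
    generalize S m ε = s
    simp only [abs_le]
    split_ifs <;> first | omega | norm_num
  rw [h, prEq_neg]
  ring

lemma P_sub_P_add_two (m K : ℕ) :
    P m K - P (m + 2) K
      = (prEq m K + prEq m (K - 1) - prEq m (K + 1) - prEq m (K + 2)) / 2 := by
  have two (j : ℤ) :
      prEq (m + 2) j = (prEq m (j - 2) + 2 * prEq m j + prEq m (j + 2)) / 4 := by
    rw [prEq_succ, prEq_succ, prEq_succ, sub_add_cancel, add_sub_cancel_right,
      sub_sub, add_assoc]
    norm_num
    ring
  induction K with
  | zero =>
    have h1 := prEq_neg m 1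
    have h2 := prEq_neg m 2
    have h := two 0
    simp only [Nat.cast_zero, P_zero, zero_sub, zero_add] at h ⊢
    linarith
  | succ K ih =>
    have h := two (K + 1)
    push_cast
    rw [P_succ, P_succ]
    rw [show (K : ℤ) + 1 - 2 = K - 1 by ring, show (K : ℤ) + 1 + 2 = K + 3 by ring] at h
    rw [show (K : ℤ) + 1 - 1 = K by ring, show (K : ℤ) + 1 + 1 = K + 2 by ring,
      show (K : ℤ) + 1 + 2 = K + 3 by ring]
    linarith

/-- if `n ≥ 1`, `k ≥ 1` and `n + k` is even, then
`P_{n−1}(k−1) − P_{n+1}(k−1) = (k/n)·P(Sₙ = k)`. -/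
theorem stmt_10 (n k : ℕ) (hn : 1 ≤ n) (hk : 1 ≤ k) (h : Even (n + k)) :
    P (n - 1) ((k : ℤ) - 1) - P (n + 1) ((k : ℤ) - 1)
      = ((k : ℝ) / (n : ℝ)) * prEq n (k : ℤ) := by
  obtain ⟨m, rfl⟩ := Nat.exists_eq_add_of_le' hn
  obtain ⟨K, rfl⟩ := Nat.exists_eq_add_of_le' hk
  have hr := prEq_ratio m (K + 1)
  have hd := P_sub_P_add_two m K
  rw [prEq_of_odd m (K - 1) (by grind), prEq_of_odd m (K + 1) (by grind)] at hd
  rw [prEq_succ]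
  push_cast at hr ⊢
  simp only [add_sub_cancel_right] at hr ⊢
  rw [show (K : ℤ) + 1 + 1 = K + 2 by ring] at hr ⊢
  rw [show m + 1 + 1 = m + 2 from rfl, hd]
  have hm : (m : ℝ) + 1 ≠ 0 := by positivity
  field_simp
  linarith
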